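/- The two-term cochain complex 0 → A ⊗_R A →(m)→ A → 0, concentrated in degrees 0 and 1 with differential m, has vanishing cohomology in degree 1, and its degree-0 cohomology (that is, ker(m)) is isomorphic as an R-module to A. (This is the local statement of invariance of the parametrized Khovanov homology under the left-twisted first Reidemeister move.) -/

import Mathlib

open Polynomial TensorProduct

/-- Khovanov's parametrized Frobenius algebra `A = R[X]/(X² − sX − t)`. -/
noncomputable abbrev KhovanovA (R : Type*) [CommRing R] (s t : R) : Type _ :=
  AdjoinRoot (X ^ 2 - C s * X - C t)

/-- The generator `x` (the image of `X`) of Khovanov's parametrized Frobenius algebra. -/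
noncomputable abbrev KhovanovX (R : Type*) [CommRing R] (s t : R) : KhovanovA R s t :=
  AdjoinRoot.root (X ^ 2 - C s * X - C t)

/-- If every element of an `R`-algebra `A` is `r + coord c • x` for a linear functional `coord`
with `coord 1 = 0` and `coord x = 1`, then `a ↦ a ⊗ x - a x ⊗ 1` identifies `A` with the kernel
of multiplication. -/
noncomputable def kerMulEquivOfCoord {R A : Type*} [CommRing R] [CommRing A] [Algebra R A]
    (coord : A →ₗ[R] R) (x : A) (coord_one : coord 1 = 0) (coord_x : coord x = 1)
    (decomp : ∀ c, ∃ r : R, c = algebraMap R A r + coord c • x) :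
    LinearMap.ker (LinearMap.mul' R A) ≃ₗ[R] A :=
  let incl : A →ₗ[R] A ⊗[R] A :=
    (TensorProduct.mk R A A).flip x - (TensorProduct.mk R A A).flip 1 ∘ₗ LinearMap.mulRight R x
  let proj : A ⊗[R] A →ₗ[R] A := TensorProduct.rid R A ∘ₗ coord.lTensor A
  have incl_proj (z : A ⊗[R] A) : incl (proj z) = z - LinearMap.mul' R A z ⊗ₜ[R] 1 := by
    induction z with
    | zero => simp
    | add y z hy hz => rw [map_add, map_add, hy, hz, map_add, add_tmul]; abel
    | tmul a c =>
      obtain ⟨r, hr⟩ := decomp c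
      have hac : a ⊗ₜ[R] c = (r • a) ⊗ₜ[R] 1 + (coord c • a) ⊗ₜ[R] x := by
        conv_lhs => rw [hr, Algebra.algebraMap_eq_smul_one]
        simp only [tmul_add, tmul_smul, smul_tmul']
      have hmul : a * c = r • a + coord c • (a * x) := by
        conv_lhs => rw [hr, Algebra.algebraMap_eq_smul_one]
        simp [mul_add]
      have hincl : incl (proj (a ⊗ₜ c)) =
          (coord c • a) ⊗ₜ[R] x - (coord c • (a * x)) ⊗ₜ[R] 1 := by
        simp [incl, proj, smul_sub, smul_tmul']
      rw [hincl, LinearMap.mul'_apply, hmul, hac, add_tmul]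
      abel
  have proj_incl (a : A) : proj (incl a) = a := by
    simp [incl, proj, coord_one, coord_x]
  LinearEquiv.ofLinearMap (proj ∘ₗ Submodule.subtype _)
    (incl.codRestrict _ fun a => by simp [incl])
    (LinearMap.ext proj_incl)
    (LinearMap.ext fun z => Subtype.ext <| (incl_proj z).trans <| by
      rw [LinearMap.mem_ker.1 z.2, zero_tmul, sub_zero, LinearMap.id_apply])

theorem monic_X_sq_sub_C_mul_X_sub_C {R : Type*} [CommRing R] (s t : R) :
    (X ^ 2 - C s * X - C t : R[X]).Monic := by
  monicity!

/-- The functional on `R[X]/(X² − sX − t)` reading off the coefficient of `x` in the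
basis `{1, x}`. -/
noncomputable def KhovanovA.coordX (R : Type*) [CommRing R] (s t : R) : KhovanovA R s t →ₗ[R] R :=
  lcoeff R 1 ∘ₗ AdjoinRoot.modByMonicHom (monic_X_sq_sub_C_mul_X_sub_C s t)

theorem KhovanovA.coordX_mk_linear {R : Type*} [CommRing R] (s t a b : R) :
    KhovanovA.coordX R s t (AdjoinRoot.mk _ (C a * X + C b)) = a := by
  nontriviality R
  have hdeg : (X ^ 2 - C s * X - C t : R[X]).degree = 2 := by compute_degree!
  have hlt : (C a * X + C b).degree < (X ^ 2 - C s * X - C t : R[X]).degree := by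
    rw [hdeg]
    exact degree_linear_le.trans_lt (by norm_num)
  rw [KhovanovA.coordX, LinearMap.comp_apply, AdjoinRoot.modByMonicHom_mk,
    (modByMonic_eq_self_iff (monic_X_sq_sub_C_mul_X_sub_C s t)).2 hlt]
  simp

theorem KhovanovA.exists_mk_linear {R : Type*} [CommRing R] (s t : R) (c : KhovanovA R s t) :
    ∃ a b : R, c = AdjoinRoot.mk _ (C a * X + C b) := by
  obtain ⟨p, rfl⟩ := AdjoinRoot.mk_surjective c
  rcases subsingleton_or_nontrivial R with _ | _
  · exact ⟨0, 0, congrArg _ (Subsingleton.elim _ _)⟩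
  have hmonic := monic_X_sq_sub_C_mul_X_sub_C s t
  have hdeg : (X ^ 2 - C s * X - C t : R[X]).degree = 2 := by compute_degree!
  have hle : (p %ₘ (X ^ 2 - C s * X - C t)).degree ≤ 1 := by
    have h := degree_modByMonic_lt p hmonic
    rw [hdeg] at h
    exact Order.le_of_lt_succ h
  refine ⟨(p %ₘ (X ^ 2 - C s * X - C t)).coeff 1, (p %ₘ (X ^ 2 - C s * X - C t)).coeff 0, ?_⟩
  rw [← eq_X_add_C_of_degree_le_one hle, ← AdjoinRoot.modByMonicHom_mk hmonic,
    AdjoinRoot.mk_leftInverse hmonic]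

/-- Local invariance under the left-twisted first Reidemeister move: the two-term cochain
complex `0 → A ⊗ A → A → 0` with differential `m` has vanishing cohomology in degree 1
(its cokernel `A / range m` is trivial) and its degree-0 cohomology `ker m` is isomorphic
to `A` as an `R`-module. -/
theorem khovanov_R1_local_invariance (R : Type*) [CommRing R] (s t : R) :
    Subsingleton (KhovanovA R s t ⧸ LinearMap.range (LinearMap.mul' R (KhovanovA R s t)))
    ∧ Nonempty (LinearMap.ker (LinearMap.mul' R (KhovanovA R s t)) ≃ₗ[R] KhovanovA R s t) := by
  refine ⟨Submodule.Quotient.subsingleton_iff.2 <| LinearMap.range_eq_top.2 fun a =>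
    ⟨a ⊗ₜ 1, by simp⟩, ⟨kerMulEquivOfCoord (KhovanovA.coordX R s t) (KhovanovX R s t) ?_ ?_ ?_⟩⟩
  · simpa using KhovanovA.coordX_mk_linear s t 0 1
  · simpa using KhovanovA.coordX_mk_linear s t 1 0
  · intro c
    obtain ⟨a, b, rfl⟩ := KhovanovA.exists_mk_linear s t c
    refine ⟨b, ?_⟩
    rw [KhovanovA.coordX_mk_linear, Algebra.smul_def, AdjoinRoot.algebraMap_eq, map_add, map_mul,
      AdjoinRoot.mk_C, AdjoinRoot.mk_C, AdjoinRoot.mk_X, add_comm]
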